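/- Let L, N be a lightlike frame along the unit-speed spacelike curve γ̂ with first components L₀ and N₀ of L and N nonzero at 0, and set h̃_L(u) = ⟨γ̂(u) − γ̂(0), L(0)/L₀(0)⟩ and h̃_N(u) = ⟨γ̂(u) − γ̂(0), N(0)/N₀(0)⟩. Then for every integer k ≥ 2: h̃_L(0) = h̃_L′(0) = ⋯ = h̃_L^{(k)}(0) = 0 if and only if α_L(0) = α_L′(0) = ⋯ = α_L^{(k−2)}(0) = 0; and h̃_N(0) = ⋯ = h̃_N^{(k)}(0) = 0 if and only if α_N(0) = ⋯ = α_N^{(k−2)}(0) = 0. -/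

import Mathlib

open scoped Topology

noncomputable section

/-- Points/vectors of Lorentz–Minkowski 3-space `ℝ³₁`. -/
abbrev R3 : Type := Fin 3 → ℝ

/-- The Lorentz–Minkowski scalar product `⟨x,y⟩ = -x₀y₀ + x₁y₁ + x₂y₂`. -/
def mink (x y : R3) : ℝ := -(x 0 * y 0) + x 1 * y 1 + x 2 * y 2

/-- `(L, N)` is a lightlike frame along the unit-speed spacelike curve `γ` on `I`:
`γ, L, N` are smooth on `I`, `⟨e,e⟩ = 1` (with `e = γ'`), `⟨e,L⟩ = ⟨e,N⟩ = 0`,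
`⟨L,L⟩ = ⟨N,N⟩ = 0` and `⟨L,N⟩ = 1` on `I`. -/
structure LightlikeFrame (I : Set ℝ) (γ L N : ℝ → R3) : Prop where
  smooth_gamma : ContDiffOn ℝ (⊤ : ℕ∞) γ I
  smooth_L : ContDiffOn ℝ (⊤ : ℕ∞) L I
  smooth_N : ContDiffOn ℝ (⊤ : ℕ∞) N I
  unit_speed : ∀ u ∈ I, mink (deriv γ u) (deriv γ u) = 1
  eL : ∀ u ∈ I, mink (deriv γ u) (L u) = 0
  eN : ∀ u ∈ I, mink (deriv γ u) (N u) = 0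
  LL : ∀ u ∈ I, mink (L u) (L u) = 0
  NN : ∀ u ∈ I, mink (N u) (N u) = 0
  LN : ∀ u ∈ I, mink (L u) (N u) = 1

/-- `α_L = ⟨γ'', L⟩`. -/
def alphaL (γ L : ℝ → R3) (u : ℝ) : ℝ := mink (deriv (deriv γ) u) (L u)

/-- `α_N = ⟨γ'', N⟩`. -/
def alphaN (γ N : ℝ → R3) (u : ℝ) : ℝ := mink (deriv (deriv γ) u) (N u)

/-- `α_G = ⟨L, N'⟩`. -/
def alphaG (L N : ℝ → R3) (u : ℝ) : ℝ := mink (L u) (deriv N u)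

/-- `σ_L = α_L' + α_L α_G`. -/
def sigmaL (γ L N : ℝ → R3) (u : ℝ) : ℝ :=
  deriv (alphaL γ L) u + alphaL γ L u * alphaG L N u

/-- `σ_N = α_N' - α_N α_G`. -/
def sigmaN (γ L N : ℝ → R3) (u : ℝ) : ℝ :=
  deriv (alphaN γ N) u - alphaN γ N u * alphaG L N u

/-!
Write `v = L(0)` and `A = ⟨γ', v⟩`, which is, up to the factor `1 / L₀(0)`, the derivative of the
height function. Expanding `v` in the frame `(e, L, N)` gives
`A' = ⟨N, v⟩ α_L + ⟨γ'', N⟩ ⟨L, v⟩`, and since `v` is null, `A² + 2 ⟨L, v⟩ ⟨N, v⟩ = 0`. As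
`⟨N, v⟩` is nonzero near `0`, eliminating `⟨L, v⟩` leaves a scalar linear equation
`A' = ⟨N, v⟩ α_L + r A` with `A(0) = 0`. The term `r A` vanishes at `0` to at least the order of
`A`, which exceeds that of `A'`, so `A` vanishes to exactly one order more than `α_L` does.
-/

/-- The vanishing of all derivatives of order less than `n` of `f` at `x`. Vanishing of
the derivatives up to and including order `k` is the case `n = k + 1`. -/
def VanishesToOrder {𝕜 F : Type*} [NontriviallyNormedField 𝕜] [NormedAddCommGroup F]
    [NormedSpace 𝕜 F] (n : ℕ) (f : 𝕜 → F) (x : 𝕜) : Prop :=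
  ∀ l < n, iteratedDeriv l f x = 0

namespace VanishesToOrder

variable {𝕜 : Type*} [NontriviallyNormedField 𝕜] {n : ℕ} {x : 𝕜}

section NormedSpace

variable {F : Type*} [NormedAddCommGroup F] [NormedSpace 𝕜 F] {f g : 𝕜 → F}

theorem zero (f : 𝕜 → F) (x : 𝕜) : VanishesToOrder 0 f x :=
  fun l hl => absurd hl l.not_lt_zero

theorem mono {m : ℕ} (hmn : m ≤ n) (hf : VanishesToOrder n f x) : VanishesToOrder m f x :=
  fun l hl => hf l (hl.trans_le hmn)

theorem succ_iff : VanishesToOrder (n + 1) f x ↔ f x = 0 ∧ VanishesToOrder n (deriv f) x := by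
  simp only [VanishesToOrder, Nat.forall_lt_succ_left, iteratedDeriv_zero, iteratedDeriv_succ']

theorem congr_iff (hfg : f =ᶠ[𝓝 x] g) : VanishesToOrder n f x ↔ VanishesToOrder n g x := by
  simp only [VanishesToOrder, hfg.iteratedDeriv_eq]

theorem add (hf : ContDiffAt 𝕜 n f x) (hg : ContDiffAt 𝕜 n g x) (hf0 : VanishesToOrder n f x)
    (hg0 : VanishesToOrder n g x) : VanishesToOrder n (f + g) x := fun l hl => by
  have hln : (l : WithTop ℕ∞) ≤ n := mod_cast hl.le
  rw [iteratedDeriv_add (hf.of_le hln) (hg.of_le hln), hf0 l hl, hg0 l hl, add_zero]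

theorem sub (hf : ContDiffAt 𝕜 n f x) (hg : ContDiffAt 𝕜 n g x) (hf0 : VanishesToOrder n f x)
    (hg0 : VanishesToOrder n g x) : VanishesToOrder n (f - g) x := fun l hl => by
  have hln : (l : WithTop ℕ∞) ≤ n := mod_cast hl.le
  rw [iteratedDeriv_sub (hf.of_le hln) (hg.of_le hln), hf0 l hl, hg0 l hl, sub_zero]

end NormedSpace

section NormedAlgebra

variable {𝔸 : Type*} [NormedRing 𝔸] [NormedAlgebra 𝕜 𝔸] {f g r : 𝕜 → 𝔸}

theorem mul_left (hf : ContDiffAt 𝕜 n f x) (hg : ContDiffAt 𝕜 n g x)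
    (hg0 : VanishesToOrder n g x) : VanishesToOrder n (f * g) x := fun l hl => by
  have hln : (l : WithTop ℕ∞) ≤ n := mod_cast hl.le
  rw [iteratedDeriv_mul (hf.of_le hln) (hg.of_le hln)]
  refine Finset.sum_eq_zero fun i _ => ?_
  rw [hg0 (l - i) ((l.sub_le i).trans_lt hl), mul_zero]

theorem succ_iff_deriv_sub_mul (hf : ContDiffAt 𝕜 (n + 1) f x) (hr : ContDiffAt 𝕜 n r x)
    (hfx : f x = 0) :
    VanishesToOrder (n + 1) f x ↔ VanishesToOrder n (deriv f - r * f) x := by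
  have hf' : ContDiffAt 𝕜 n (deriv f) x := hf.derivWithin le_rfl
  have hfn : ContDiffAt 𝕜 n f x := hf.of_le le_self_add
  refine ⟨fun h => sub hf' (hr.mul hfn) (succ_iff.1 h).2 (mul_left hr hfn (h.mono n.le_succ)),
    fun h => ?_⟩
  suffices ∀ m ≤ n + 1, VanishesToOrder m f x from this _ le_rfl
  intro m hm
  induction m with
  | zero => exact zero f x
  | succ m ih =>
    have hmn : m ≤ n := Nat.le_of_succ_le_succ hm
    have hmn' : (m : WithTop ℕ∞) ≤ n := mod_cast hmn
    have hrf : VanishesToOrder m (r * f) x :=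
      mul_left (hr.of_le hmn') (hfn.of_le hmn') (ih (hmn.trans n.le_succ))
    refine succ_iff.2 ⟨hfx, ?_⟩
    rw [← sub_add_cancel (deriv f) (r * f)]
    exact add ((hf'.sub (hr.mul hfn)).of_le hmn') ((hr.mul hfn).of_le hmn') (h.mono hmn) hrf

end NormedAlgebra

theorem mul_left_iff {𝕂 : Type*} [NormedField 𝕂] [NormedAlgebra 𝕜 𝕂] {f g : 𝕜 → 𝕂}
    (hf : ContDiffAt 𝕜 n f x) (hg : ContDiffAt 𝕜 n g x) (hfx : f x ≠ 0) :
    VanishesToOrder n (f * g) x ↔ VanishesToOrder n g x := by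
  refine ⟨fun h => ?_, mul_left hf hg⟩
  refine (congr_iff ?_).1 (mul_left (hf.inv hfx) (hf.mul hg) h)
  filter_upwards [hf.continuousAt.eventually_ne hfx] with u hu
  exact inv_mul_cancel_left₀ hu (g u)

end VanishesToOrder

/-- A triad `(e, l, n)` with the inner products of a lightlike frame at one point: `e` is a unit
vector and `(l, n)` is a normalized pair of null vectors orthogonal to `e`. -/
structure IsNullTriad {K V : Type*} [CommRing K] [AddCommGroup V] [Module K V]
    (B : LinearMap.BilinForm K V) (e l n : V) : Prop where
  ee : B e e = 1
  el : B e l = 0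
  en : B e n = 0
  ll : B l l = 0
  nn : B n n = 0
  ln : B l n = 1

namespace IsNullTriad

theorem coeff_eq {K V : Type*} [CommRing K] [AddCommGroup V] [Module K V]
    {B : LinearMap.BilinForm K V} {e l n v : V} {a b c : K} (h : IsNullTriad B e l n)
    (hB : B.IsSymm) (hv : a • e + b • l + c • n = v) : a = B e v ∧ b = B n v ∧ c = B l v := by
  subst hv
  simp [h.ee, h.el, h.en, h.ll, h.nn, h.ln, hB.eq l e, hB.eq n e, hB.eq n l]

variable {K V : Type*} [Field K] [AddCommGroup V] [Module K V] {B : LinearMap.BilinForm K V}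
  {e l n : V}

theorem expansion (h : IsNullTriad B e l n) (hB : B.IsSymm) (hV : Module.finrank K V = 3)
    (v : V) : B e v • e + B n v • l + B l v • n = v := by
  have independent : LinearIndependent K ![e, l, n] := by
    rw [Fintype.linearIndependent_iff]
    intro g hg
    simp only [Fin.sum_univ_three, Matrix.cons_val] at hg
    simpa [Fin.forall_fin_succ] using h.coeff_eq hB hg
  have span_eq_top := independent.span_eq_top_of_card_eq_finrank (by simp [hV])
  have hv : v ∈ Submodule.span K {e, l, n} := by
    have range_eq : Set.range ![e, l, n] = {e, l, n} := by
      simp only [Matrix.range_cons, Matrix.range_empty, Set.union_empty, Set.singleton_union]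
    rw [← range_eq, span_eq_top]
    exact Submodule.mem_top
  obtain ⟨a, b, c, hv⟩ := Submodule.mem_span_triple.1 hv
  obtain ⟨rfl, rfl, rfl⟩ := h.coeff_eq hB hv
  exact hv

theorem apply_eq (h : IsNullTriad B e l n) (hB : B.IsSymm) (hV : Module.finrank K V = 3)
    (x v : V) : B x v = B e v * B x e + B n v * B x l + B l v * B x n := by
  conv_lhs => rw [← h.expansion hB hV v]
  simp

theorem apply_eq_of_null [NeZero (2 : K)] (h : IsNullTriad B e l n) (hB : B.IsSymm)
    (hV : Module.finrank K V = 3) {x v : V} (hx : B x e = 0) (hv : B v v = 0)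
    (hnv : B n v ≠ 0) :
    B x v = B n v * B x l - B x n * B e v / (2 * B n v) * B e v := by
  have null := h.apply_eq hB hV v v
  have hxv := h.apply_eq hB hV x v
  rw [hv, hB.eq v e, hB.eq v l, hB.eq v n] at null
  rw [hx] at hxv
  have two_ne_zero : (2 : K) ≠ 0 := NeZero.ne 2
  field_simp
  linear_combination 2 * B n v * hxv - B x n * null

end IsNullTriad

/-- The Lorentz–Minkowski scalar product `mink` bundled as a bilinear form. -/
def minkForm : LinearMap.BilinForm ℝ R3 :=
  LinearMap.mk₂ ℝ mink
    (fun x y z => by simp only [mink, Pi.add_apply]; ring)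
    (fun c x y => by simp only [mink, Pi.smul_apply, smul_eq_mul]; ring)
    (fun x y z => by simp only [mink, Pi.add_apply]; ring)
    (fun c x y => by simp only [mink, Pi.smul_apply, smul_eq_mul]; ring)

theorem minkForm_apply (x y : R3) : minkForm x y = mink x y := rfl

theorem minkForm_isSymm : minkForm.IsSymm where
  eq x y := by simp only [minkForm_apply, mink]; ring

theorem mink_comm (x y : R3) : mink x y = mink y x := minkForm_isSymm.eq x y

section Calculus

variable {f g : ℝ → R3} {x : ℝ}

theorem contDiffAt_mink {n : WithTop ℕ∞} (hf : ContDiffAt ℝ n f x) (hg : ContDiffAt ℝ n g x) :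
    ContDiffAt ℝ n (fun u => mink (f u) (g u)) x :=
  minkForm.toContinuousBilinearMap.isBoundedBilinearMap.contDiff.comp₂_contDiffAt hf hg

theorem deriv_mink (hf : DifferentiableAt ℝ f x) (hg : DifferentiableAt ℝ g x) :
    deriv (fun u => mink (f u) (g u)) x = mink (f x) (deriv g x) + mink (deriv f x) (g x) :=
  minkForm.toContinuousBilinearMap.deriv_of_bilinear (fun _ => hf) (fun _ => hg)

theorem deriv_mink_const (hf : DifferentiableAt ℝ f x) (v : R3) :
    deriv (fun u => mink (f u) v) x = mink (deriv f x) v := by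
  rw [deriv_mink hf (differentiableAt_const v), deriv_const, ← minkForm_apply (f x), map_zero,
    zero_add]

end Calculus

namespace LightlikeFrame

variable {I : Set ℝ} {γ L N : ℝ → R3} {x : ℝ}

theorem symm (h : LightlikeFrame I γ L N) : LightlikeFrame I γ N L where
  smooth_gamma := h.smooth_gamma
  smooth_L := h.smooth_N
  smooth_N := h.smooth_L
  unit_speed := h.unit_speed
  eL := h.eN
  eN := h.eL
  LL := h.NN
  NN := h.LL
  LN u hu := by rw [mink_comm, h.LN u hu]

theorem isNullTriad (h : LightlikeFrame I γ L N) (hx : x ∈ I) :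
    IsNullTriad minkForm (deriv γ x) (L x) (N x) :=
  ⟨h.unit_speed x hx, h.eL x hx, h.eN x hx, h.LL x hx, h.NN x hx, h.LN x hx⟩

theorem contDiffAt_curve (h : LightlikeFrame I γ L N) (hI : IsOpen I) (hx : x ∈ I) (n : ℕ) :
    ContDiffAt ℝ n γ x :=
  contDiffAt_infty.1 (h.smooth_gamma.contDiffAt (hI.mem_nhds hx)) n

theorem contDiffAt_L (h : LightlikeFrame I γ L N) (hI : IsOpen I) (hx : x ∈ I) (n : ℕ) :
    ContDiffAt ℝ n L x :=
  contDiffAt_infty.1 (h.smooth_L.contDiffAt (hI.mem_nhds hx)) n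

theorem contDiffAt_deriv (h : LightlikeFrame I γ L N) (hI : IsOpen I) (hx : x ∈ I) (n : ℕ) :
    ContDiffAt ℝ n (deriv γ) x :=
  (h.contDiffAt_curve hI hx (n + 1)).derivWithin (by norm_cast)

theorem contDiffAt_deriv_deriv (h : LightlikeFrame I γ L N) (hI : IsOpen I) (hx : x ∈ I)
    (n : ℕ) : ContDiffAt ℝ n (deriv (deriv γ)) x :=
  (h.contDiffAt_deriv hI hx (n + 1)).derivWithin (by norm_cast)

theorem differentiableAt_deriv (h : LightlikeFrame I γ L N) (hI : IsOpen I) (hx : x ∈ I) :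
    DifferentiableAt ℝ (deriv γ) x :=
  (h.contDiffAt_deriv hI hx 1).differentiableAt (by simp)

theorem mink_deriv_deriv_deriv_eq_zero (h : LightlikeFrame I γ L N) (hI : IsOpen I) (hx : x ∈ I) :
    mink (deriv (deriv γ) x) (deriv γ x) = 0 := by
  have he := h.differentiableAt_deriv hI hx
  have hconst : (fun u => mink (deriv γ u) (deriv γ u)) =ᶠ[𝓝 x] fun _ => 1 :=
    Filter.eventually_of_mem (hI.mem_nhds hx) h.unit_speed
  have hderiv := hconst.deriv_eq
  rw [deriv_mink he he, deriv_const, mink_comm (deriv γ x)] at hderiv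
  linarith

theorem deriv_mink_deriv (h : LightlikeFrame I γ L N) (hI : IsOpen I) (hx : x ∈ I) {v : R3}
    (hv : mink v v = 0) (hNv : mink (N x) v ≠ 0) :
    deriv (fun u => mink (deriv γ u) v) x = mink (N x) v * alphaL γ L x -
      mink (deriv (deriv γ) x) (N x) * mink (deriv γ x) v / (2 * mink (N x) v) *
        mink (deriv γ x) v := by
  rw [deriv_mink_const (h.differentiableAt_deriv hI hx)]
  exact (h.isNullTriad hx).apply_eq_of_null minkForm_isSymm (by simp)
    (h.mink_deriv_deriv_deriv_eq_zero hI hx) hv hNv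

theorem vanishesToOrder_mink_deriv_iff (h : LightlikeFrame I γ L N) (hI : IsOpen I) (hx : x ∈ I)
    (n : ℕ) :
    VanishesToOrder (n + 1) (fun u => mink (deriv γ u) (L x)) x ↔
      VanishesToOrder n (alphaL γ L) x := by
  have hA (k : ℕ) : ContDiffAt ℝ k (fun u => mink (deriv γ u) (L x)) x :=
    contDiffAt_mink (h.contDiffAt_deriv hI hx k) contDiffAt_const
  have hB : ContDiffAt ℝ n (fun u => mink (N u) (L x)) x :=
    contDiffAt_mink (h.symm.contDiffAt_L hI hx n) contDiffAt_const
  have hα : ContDiffAt ℝ n (alphaL γ L) x :=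
    contDiffAt_mink (h.contDiffAt_deriv_deriv hI hx n) (h.contDiffAt_L hI hx n)
  have hB0 : mink (N x) (L x) ≠ 0 := by simp [h.symm.LN x hx]
  let r : ℝ → ℝ := fun u =>
    -(mink (deriv (deriv γ) u) (N u) * mink (deriv γ u) (L x) / (2 * mink (N u) (L x)))
  have hr : ContDiffAt ℝ n r x :=
    (((contDiffAt_mink (h.contDiffAt_deriv_deriv hI hx n) (h.symm.contDiffAt_L hI hx n)).mul
      (hA n)).div (contDiffAt_const.mul hB) (mul_ne_zero two_ne_zero hB0)).neg
  rw [VanishesToOrder.succ_iff_deriv_sub_mul (hA (n + 1)) hr (h.eL x hx),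
    ← VanishesToOrder.mul_left_iff hB hα hB0]
  refine VanishesToOrder.congr_iff ?_
  filter_upwards [hI.mem_nhds hx, hB.continuousAt.eventually_ne hB0] with u hu hBu
  simp only [Pi.sub_apply, Pi.mul_apply, h.deriv_mink_deriv hI hu (h.LL x hx) hBu, r]
  ring

theorem vanishesToOrder_height_iff (h : LightlikeFrame I γ L N) (hI : IsOpen I) (hx : x ∈ I)
    {c : ℝ} (hc : c ≠ 0) (n : ℕ) :
    VanishesToOrder (n + 2) (fun u => mink (γ u - γ x) (c • L x)) x ↔
      VanishesToOrder n (alphaL γ L) x := by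
  have hγ : ContDiffAt ℝ (n + 2 : ℕ) (fun u => γ u - γ x) x :=
    (h.contDiffAt_curve hI hx _).sub contDiffAt_const
  have scaled : (fun u => mink (γ u - γ x) (c • L x)) =
      (fun _ => c) * fun u => mink (γ u - γ x) (L x) := by
    ext u
    exact map_smul (minkForm (γ u - γ x)) c (L x)
  have hderiv : deriv (fun u => mink (γ u - γ x) (L x)) =ᶠ[𝓝 x]
      fun u => mink (deriv γ u) (L x) := by
    filter_upwards [hI.mem_nhds hx] with u hu
    have hγu := (h.contDiffAt_curve hI hu 1).differentiableAt (by simp)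
    rw [deriv_mink_const (hγu.sub_const _), deriv_sub_const]
  rw [scaled, VanishesToOrder.mul_left_iff contDiffAt_const
    (contDiffAt_mink hγ contDiffAt_const) hc, VanishesToOrder.succ_iff,
    VanishesToOrder.congr_iff hderiv, h.vanishesToOrder_mink_deriv_iff hI hx]
  simp [mink]

theorem contact_iff (h : LightlikeFrame I γ L N) (hI : IsOpen I) (hx : x ∈ I) {c : ℝ}
    (hc : c ≠ 0) {k : ℕ} (hk : 2 ≤ k) :
    (∀ l ≤ k, deriv^[l] (fun u => mink (γ u - γ x) (c • L x)) x = 0) ↔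
      ∀ l ≤ k - 2, deriv^[l] (alphaL γ L) x = 0 := by
  obtain ⟨m, rfl⟩ := Nat.exists_eq_add_of_le' hk
  simpa only [VanishesToOrder, iteratedDeriv_eq_iterate, Nat.lt_succ_iff, Nat.add_sub_cancel]
    using h.vanishesToOrder_height_iff hI hx hc (m + 1)

end LightlikeFrame

/-- With `h̃_L(u) = ⟨γ̂(u) - γ̂(0), L(0)/L₀(0)⟩`, for every `k ≥ 2`:
`h̃_L(0) = ⋯ = h̃_L⁽ᵏ⁾(0) = 0` iff `α_L(0) = ⋯ = α_L⁽ᵏ⁻²⁾(0) = 0`;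
similarly for `h̃_N` and `α_N`. -/
theorem contact_with_lightlike_plane (a b : ℝ) (γ L N : ℝ → R3)
    (hframe : LightlikeFrame (Set.Ioo a b) γ L N)
    (h0 : (0 : ℝ) ∈ Set.Ioo a b)
    (hL0 : L 0 0 ≠ 0) (hN0 : N 0 0 ≠ 0) :
    (∀ k : ℕ, 2 ≤ k →
      ((∀ l ≤ k, deriv^[l] (fun u => mink (γ u - γ 0) ((L 0 0)⁻¹ • L 0)) 0 = 0) ↔
       (∀ l ≤ k - 2, deriv^[l] (alphaL γ L) 0 = 0))) ∧
    (∀ k : ℕ, 2 ≤ k →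
      ((∀ l ≤ k, deriv^[l] (fun u => mink (γ u - γ 0) ((N 0 0)⁻¹ • N 0)) 0 = 0) ↔
       (∀ l ≤ k - 2, deriv^[l] (alphaN γ N) 0 = 0))) :=
  ⟨fun _ => hframe.contact_iff isOpen_Ioo h0 (inv_ne_zero hL0),
    fun _ => hframe.symm.contact_iff isOpen_Ioo h0 (inv_ne_zero hN0)⟩
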